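/- arXiv:1211.3945 — 2 statements merged into one kernel-verified Lean document; each statement's English description precedes it below -/
import Mathlib

section
/- Forward direction of the lemma on operators in ℂ[zⁿ,ϑ]: Let m ≥ 0, P_0, …, P_m ∈ ℂ[X], μ ∈ ℂ, n ≥ 1, and let f = ∑_{k≥0} A_k z^k ∈ ℂ⟦z⟧ with A_k = 0 whenever n does not divide k (i.e. f ∈ ℂ⟦zⁿ⟧). If L_μ(f) = 0 for L = ∑_{i=0}^m z^i P_i(ϑ), then also L'_μ(f) = 0, where L' = ∑_{0 ≤ i ≤ m, n | i} z^i P_i(ϑ) is the partial sum of L over the indices i divisible by n. -/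
noncomputable section

/-- The action of `P(ϑ + μ)` on `ℂ⟦z⟧`, sending `∑ A_k z^k` to `∑ P(μ + k) A_k z^k`.
This models the action of `P(ϑ)`, `ϑ = z d/dz`, on `z^μ · ℂ⟦z⟧`. -/
def thetaOp (P : Polynomial ℂ) (μ : ℂ) (f : PowerSeries ℂ) : PowerSeries ℂ :=
  PowerSeries.mk fun k => Polynomial.eval (μ + k) P * PowerSeries.coeff k f

/-- The action `L_μ` of the operator `L = ∑_{i=0}^m z^i P_i(ϑ)` on `z^μ · ℂ⟦z⟧`,
as an operator on `ℂ⟦z⟧`. -/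
def Lop (m : ℕ) (P : ℕ → Polynomial ℂ) (μ : ℂ) (f : PowerSeries ℂ) : PowerSeries ℂ :=
  ∑ i ∈ Finset.range (m + 1), PowerSeries.X ^ i * thetaOp (P i) μ f

/-- **Forward direction of the lemma on operators in `ℂ[zⁿ, ϑ]`.** If `f ∈ ℂ⟦zⁿ⟧`
(all coefficients in degrees not divisible by `n` vanish) is annihilated by `L_μ` for
`L = ∑_{i=0}^m z^i P_i(ϑ)`, then `f` is also annihilated by the partial sum
`L' = ∑_{n ∣ i} z^i P_i(ϑ)` of `L` over the indices divisible by `n`. -/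
theorem Lop_partial_sum_annihilates (m : ℕ) (P : ℕ → Polynomial ℂ) (μ : ℂ)
    (n : ℕ) (hn : 1 ≤ n) (A : ℕ → ℂ)
    (hA : ∀ k : ℕ, ¬ n ∣ k → A k = 0)
    (hL : Lop m P μ (PowerSeries.mk A) = 0) :
    ∑ i ∈ (Finset.range (m + 1)).filter (fun i => n ∣ i),
      PowerSeries.X ^ i * thetaOp (P i) μ (PowerSeries.mk A) = 0 := by
  have hc : ∀ d i : ℕ, PowerSeries.coeff d
      (PowerSeries.X ^ i * thetaOp (P i) μ (PowerSeries.mk A)) =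
      if i ≤ d then Polynomial.eval (μ + ((d - i : ℕ) : ℂ)) (P i) * A (d - i) else 0 := by
    intro d i
    rw [PowerSeries.coeff_X_pow_mul']
    simp [thetaOp]
  ext d
  have hd := congrArg (PowerSeries.coeff d) hL
  simp only [Lop, map_sum, hc, map_zero] at hd ⊢
  by_cases h : n ∣ d
  · refine Eq.trans ?_ hd
    apply Finset.sum_subset (Finset.filter_subset _ _)
    intro i hi hi'
    have hni : ¬ n ∣ i := fun h' => hi' (Finset.mem_filter.2 ⟨hi, h'⟩)
    split_ifs with hle
    · rw [hA, mul_zero]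
      intro h'
      exact hni ((Nat.dvd_sub_iff_right hle h).1 h')
    · rfl
  · apply Finset.sum_eq_zero
    intro i hi
    have hni : n ∣ i := (Finset.mem_filter.1 hi).2
    split_ifs with hle
    · rw [hA, mul_zero]
      intro h'
      apply h
      have := Nat.dvd_add h' hni
      rwa [Nat.sub_add_cancel hle] at this
    · rfl

end
end

section
/- Converse direction of the lemma on operators in ℂ[zⁿ,ϑ]: Let m ≥ 0, P_0, …, P_m ∈ ℂ[X], μ ∈ ℂ, n ≥ 1, and assume P_i = 0 whenever n does not divide i (i.e. L = ∑_{i=0}^m z^i P_i(ϑ) lies in ℂ[zⁿ,ϑ]). Assume moreover that P_0(μ + k) ≠ 0 for every integer k ≥ 1 with n ∤ k. If f = ∑_{k≥0} A_k z^k ∈ ℂ⟦z⟧ satisfies L_μ(f) = 0, then A_k = 0 for every k with n ∤ k; that is, f ∈ ℂ⟦zⁿ⟧. -/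
noncomputable section

/-- **Converse direction of the lemma on operators in `ℂ[zⁿ, ϑ]`.** Suppose
`L = ∑_{i=0}^m z^i P_i(ϑ)` lies in `ℂ[zⁿ, ϑ]`, i.e. `P_i = 0` whenever `n ∤ i`, and that
`P_0(μ + k) ≠ 0` for every `k ≥ 1` with `n ∤ k`. If `f = ∑ A_k z^k` satisfies
`L_μ(f) = 0`, then `A_k = 0` for all `k` with `n ∤ k`; that is, `f ∈ ℂ⟦zⁿ⟧`. -/
theorem Lop_solution_in_zn (m : ℕ) (P : ℕ → Polynomial ℂ) (μ : ℂ)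
    (n : ℕ) (hn : 1 ≤ n)
    (hP : ∀ i ≤ m, ¬ n ∣ i → P i = 0)
    (hP0 : ∀ k : ℕ, 1 ≤ k → ¬ n ∣ k → Polynomial.eval (μ + (k : ℂ)) (P 0) ≠ 0)
    (A : ℕ → ℂ)
    (hL : Lop m P μ (PowerSeries.mk A) = 0) :
    ∀ k : ℕ, ¬ n ∣ k → A k = 0 := by
  intro k
  induction k using Nat.strong_induction_on with
  | _ k ih =>
    intro hk
    have hk1 : 1 ≤ k := by
      rcases Nat.eq_zero_or_pos k with h | h
      · exact absurd (h ▸ dvd_zero n) hk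
      · exact h
    have h := congrArg (PowerSeries.coeff k) hL
    unfold Lop thetaOp at h
    rw [map_sum, map_zero, Finset.sum_eq_single 0] at h
    · simp only [pow_zero, one_mul, PowerSeries.coeff_mk] at h
      exact (mul_eq_zero.mp h).resolve_left (hP0 k hk1 hk)
    · intro i hi hi0
      rw [PowerSeries.coeff_X_pow_mul']
      split_ifs with hik
      · rw [PowerSeries.coeff_mk, PowerSeries.coeff_mk]
        by_cases hd : n ∣ i
        · have hnd : ¬ n ∣ k - i := by
            intro hc
            apply hk
            have := dvd_add hc hd
            rwa [Nat.sub_add_cancel hik] at this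
          rw [ih (k - i) (by omega) hnd, mul_zero]
        · rw [hP i (by have := Finset.mem_range.mp hi; omega) hd]
          simp
      · rfl
    · intro h0
      exact absurd (Finset.mem_range.mpr (Nat.succ_pos m)) h0

end
end
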